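/- arXiv:2512.09457 — 2 statements merged into one kernel-verified Lean document; each statement's English description precedes it below -/
import Mathlib

section
/- For an [n,k]_q linear code C with generator matrix G of rank k, the s-th generalized Hamming weight satisfies d_s(C) = n - max{ m_G(V) : V a (k-s)-dimensional subspace of F_q^k }, where m_G(V) is the number of columns of G lying in V. -/
open Module

variable {F : Type*} [Field F] [Fintype F]

/-- The support of a subspace `U ⊆ F^ι`: coordinates where some vector of `U` is nonzero. -/
def csupp {ι : Type*} (U : Submodule F (ι → F)) : Set ι :=
  {j | ∃ x ∈ U, x j ≠ 0}

/-- The support weight of a subspace of `F^ι`. -/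
noncomputable def wt {ι : Type*} (U : Submodule F (ι → F)) : ℕ := (csupp U).ncard

/-- `U` is an `s`-minimal subcode of `C`. -/
def IsMinimalSubcode {ι : Type*} (C U : Submodule F (ι → F)) (s : ℕ) : Prop :=
  U ≤ C ∧ Module.finrank F U = s ∧
    ∀ V : Submodule F (ι → F), V ≤ C → Module.finrank F V = s →
      csupp V ⊆ csupp U → V = U

/-- `C` is an `s`-minimal code. -/
def SMinimal {ι : Type*} (C : Submodule F (ι → F)) (s : ℕ) : Prop :=
  ∀ U : Submodule F (ι → F), U ≤ C → Module.finrank F U = s → IsMinimalSubcode C U s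

/-- The `s`-th generalized Hamming weight of `C`. -/
noncomputable def dGHW {ι : Type*} (C : Submodule F (ι → F)) (s : ℕ) : ℕ :=
  sInf {w | ∃ U : Submodule F (ι → F), U ≤ C ∧ Module.finrank F U = s ∧ wt U = w}

/-- The `s`-th maximum support weight of `C`. -/
noncomputable def DGHW {ι : Type*} (C : Submodule F (ι → F)) (s : ℕ) : ℕ :=
  sSup {w | ∃ U : Submodule F (ι → F), U ≤ C ∧ Module.finrank F U = s ∧ wt U = w}

/-- The orthogonal complement of `V ⊆ F^k` with respect to the standard bilinear form. -/
def perp {k : ℕ} (V : Submodule F (Fin k → F)) : Submodule F (Fin k → F) :=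
  ⨅ v ∈ V, LinearMap.ker (∑ j, v j • (LinearMap.proj j : (Fin k → F) →ₗ[F] F))

/-- `mG G W` counts the columns of `G` lying in the subspace `W`. -/
noncomputable def mG {k n : ℕ} (G : Matrix (Fin k) (Fin n) F)
    (W : Submodule F (Fin k → F)) : ℕ :=
  {i : Fin n | (fun r => G r i) ∈ W}.ncard

/-!
Write `C` as the image of the message space `F^k` under `x ↦ x ᵥ* G`, which is injective because
`G` has rank `k`; subcodes of dimension `s` are then the images of the subspaces `W ⊆ F^k` of
dimension `s`. The `i`-th coordinate of the codeword of `x` is the dot product of `x` with the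
`i`-th column of `G`, so the image of `W` vanishes at `i` exactly when that column lies in
`perp W`. Hence its support weight is `n - mG G (perp W)`, and `perp` is an involution exchanging
the dimensions `s` and `k - s`.
-/

section DotProduct

variable {R m : Type*} [CommSemiring R] [Fintype m]

lemma isRefl_dotProductBilin :
    LinearMap.BilinForm.IsRefl (dotProductBilin R R : LinearMap.BilinForm R (m → R)) :=
  fun v w h ↦ (dotProduct_comm w v).trans h

lemma nondegenerate_dotProductBilin :
    (dotProductBilin R R : LinearMap.BilinForm R (m → R)).Nondegenerate :=
  ⟨fun v hv ↦ dotProduct_eq_zero v hv,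
    fun w hw ↦ dotProduct_eq_zero w fun v ↦ isRefl_dotProductBilin v w (hw v)⟩

end DotProduct

lemma exists_submodule_finrank_eq {R M : Type*} [Semiring R] [StrongRankCondition R]
    [AddCommMonoid M] [Module R M] {d : ℕ} (hd : d ≤ finrank R M) :
    ∃ V : Submodule R M, finrank R V = d := by
  obtain ⟨v, hv⟩ := exists_linearIndependent_of_le_finrank hd
  refine ⟨Submodule.span R (Set.range v), ?_⟩
  rw [finrank_eq_card_basis (Basis.span hv), Fintype.card_fin]

lemma vecMulLinear_injective_of_rank_eq_card {K m n : Type*} [Field K] [Fintype m] [Fintype n]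
    {A : Matrix m n K} (hA : A.rank = Fintype.card m) : Function.Injective A.vecMulLinear := by
  have h_rows : LinearIndependent K A.row := by
    rw [linearIndependent_iff_card_eq_finrank_span, Set.finrank, ← A.rank_eq_finrank_span_row, hA]
  exact Matrix.vecMul_injective_iff.2 h_rows

section Field

variable {K : Type*} [Field K] {k : ℕ}

lemma mem_perp {V : Submodule K (Fin k → K)} {x : Fin k → K} :
    x ∈ perp V ↔ ∀ v ∈ V, v ⬝ᵥ x = 0 := by
  simp [perp, dotProduct]

lemma perp_eq_orthogonal (V : Submodule K (Fin k → K)) :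
    perp V = LinearMap.BilinForm.orthogonal (dotProductBilin K K) V :=
  Submodule.ext fun _ ↦ mem_perp

lemma finrank_perp (V : Submodule K (Fin k → K)) : finrank K (perp V) = k - finrank K V := by
  rw [perp_eq_orthogonal, LinearMap.BilinForm.finrank_orthogonal nondegenerate_dotProductBilin,
    finrank_fin_fun]

lemma perp_perp (V : Submodule K (Fin k → K)) : perp (perp V) = V := by
  simp only [perp_eq_orthogonal]
  exact LinearMap.BilinForm.orthogonal_orthogonal nondegenerate_dotProductBilin
    isRefl_dotProductBilin V

lemma csupp_map_vecMulLinear {ι : Type*} (G : Matrix (Fin k) ι K)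
    (W : Submodule K (Fin k → K)) :
    csupp (W.map G.vecMulLinear) = {i | (fun r ↦ G r i) ∈ perp W}ᶜ := by
  ext i
  simp [csupp, mem_perp, Matrix.vecMul]

variable {n s : ℕ}

lemma wt_map_vecMulLinear (G : Matrix (Fin k) (Fin n) K) (W : Submodule K (Fin k → K)) :
    wt (W.map G.vecMulLinear) = n - mG G (perp W) := by
  rw [wt, csupp_map_vecMulLinear, Set.ncard_compl, Nat.card_fin, mG]

lemma mG_le (G : Matrix (Fin k) (Fin n) K) (V : Submodule K (Fin k → K)) : mG G V ≤ n := by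
  simpa [mG] using Set.ncard_le_card {i | (fun r ↦ G r i) ∈ V}

lemma exists_isGreatest_mG (G : Matrix (Fin k) (Fin n) K) {d : ℕ} (hd : d ≤ k) :
    ∃ a, IsGreatest {m | ∃ V : Submodule K (Fin k → K), finrank K V = d ∧ mG G V = m} a := by
  obtain ⟨V, hV⟩ := exists_submodule_finrank_eq (hd.trans_eq (finrank_fin_fun K).symm)
  refine BddAbove.exists_isGreatest_of_nonempty ⟨n, ?_⟩ ⟨_, V, hV, rfl⟩
  rintro _ ⟨V', -, rfl⟩
  exact mG_le G V'

variable {G : Matrix (Fin k) (Fin n) K}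

lemma setOf_wt_eq_image_mG (hs : s ≤ k) (hG : G.rank = k) :
    {w | ∃ U ≤ LinearMap.range G.vecMulLinear, finrank K U = s ∧ wt U = w} =
      (n - ·) '' {m | ∃ V : Submodule K (Fin k → K), finrank K V = k - s ∧ mG G V = m} := by
  have h_inj : Function.Injective G.vecMulLinear :=
    vecMulLinear_injective_of_rank_eq_card (by simpa using hG)
  have h_finrank (W : Submodule K (Fin k → K)) :
      finrank K (W.map G.vecMulLinear) = finrank K W :=
    (W.equivMapOfInjective _ h_inj).finrank_eq.symm
  ext w
  constructor
  · rintro ⟨U, hU, rfl, rfl⟩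
    obtain ⟨W, rfl⟩ : ∃ W : Submodule K (Fin k → K), W.map G.vecMulLinear = U :=
      ⟨_, Submodule.map_comap_eq_of_le hU⟩
    exact ⟨_, ⟨perp W, by rw [finrank_perp, h_finrank], rfl⟩, (wt_map_vecMulLinear G W).symm⟩
  · rintro ⟨_, ⟨V, hV, rfl⟩, rfl⟩
    refine ⟨(perp V).map G.vecMulLinear, LinearMap.map_le_range, ?_, ?_⟩
    · rw [h_finrank, finrank_perp, hV, Nat.sub_sub_self hs]
    · rw [wt_map_vecMulLinear, perp_perp]

theorem dGHW_eq_n_sub_max_mG_general (hs : s ≤ k) (hG : G.rank = k) :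
    dGHW (LinearMap.range G.vecMulLinear) s =
      n - sSup {m | ∃ V : Submodule K (Fin k → K), finrank K V = k - s ∧ mG G V = m} := by
  obtain ⟨a, ha⟩ := exists_isGreatest_mG G (Nat.sub_le k s)
  rw [dGHW, setOf_wt_eq_image_mG hs hG, ha.csSup_eq]
  exact (antitone_const_tsub.map_isGreatest ha).csInf_eq

end Field

/-- for a generator matrix `G` of rank `k`, the `s`-th generalized Hamming
weight of the row space equals `n` minus the maximal number of columns of `G` lying in a
`(k-s)`-dimensional subspace of `F^k`. -/
theorem dGHW_eq_n_sub_max_mG (n k s : ℕ) (hs1 : 1 ≤ s) (hs2 : s ≤ k)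
    (G : Matrix (Fin k) (Fin n) F) (hG : G.rank = k) :
    dGHW (LinearMap.range (Matrix.vecMulLinear G)) s =
      n - sSup {m | ∃ V : Submodule F (Fin k → F),
        Module.finrank F V = k - s ∧ mG G V = m} :=
  dGHW_eq_n_sub_max_mG_general hs2 hG
end

section
/- There exists a cutting s-blocking set of PG(k-1,q) of size n if and only if there exists a projective s-minimal [n,k]_q linear code. -/
open Module

variable {F : Type*} [Field F] [Fintype F]

/-- The points of `PG(k-1,q)`: the one-dimensional subspaces of `F^k`. -/
def PGpoints (F : Type*) [Field F] (k : ℕ) : Set (Submodule F (Fin k → F)) :=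
  {P | Module.finrank F P = 1}

/-- `B` is a `t`-fold `s`-blocking set of `PG(k-1,q)`: every projective subspace of
codimension `s` (i.e. `(k-s)`-dimensional linear subspace) contains at least `t` points of `B`. -/
def IsTFoldSBlocking (F : Type*) [Field F] (k : ℕ)
    (B : Set (Submodule F (Fin k → F))) (t s : ℕ) : Prop :=
  B ⊆ PGpoints F k ∧
    ∀ W : Submodule F (Fin k → F), Module.finrank F W = k - s →
      t ≤ (B ∩ {P | P ≤ W}).ncard

/-- `B` is a cutting `s`-blocking set of `PG(k-1,q)`: for every projective subspace `W` of
codimension `s`, the points of `B` lying in `W` span `W`. -/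
def IsCuttingSBlocking (F : Type*) [Field F] (k : ℕ)
    (B : Set (Submodule F (Fin k → F))) (s : ℕ) : Prop :=
  B ⊆ PGpoints F k ∧
    ∀ W : Submodule F (Fin k → F), Module.finrank F W = k - s →
      sSup (B ∩ {P | P ≤ W}) = W

/-- The dual code of `C ⊆ F^ι` with respect to the standard bilinear form. -/
def dualCode {ι : Type*} [Fintype ι] (C : Submodule F (ι → F)) : Submodule F (ι → F) :=
  ⨅ c ∈ C, LinearMap.ker (∑ j, c j • (LinearMap.proj j : (ι → F) →ₗ[F] F))

/-- A linear code is projective if its dual code has minimum Hamming distance at least 3. -/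
def IsProjectiveCode {ι : Type*} [Fintype ι] (C : Submodule F (ι → F)) : Prop :=
  ∀ x ∈ dualCode C, x ≠ 0 → 3 ≤ ({j | x j ≠ 0} : Set ι).ncard

/-! The columns `g j` of a generator matrix form a family of vectors of `E = K ^ k`, and the code is
the set of words `(f (g j))_j` for `f` in the dual of `E`. If the columns span `E`, sending `W ≤ E`
to the words of the functionals vanishing on `W` is a bijection from the subspaces of codimension
`s` to the `s`-dimensional subcodes, and the support of such a subcode is `{j | g j ∉ W}`. Hence the
code is `s`-minimal iff, among the subspaces of codimension `s`, the columns lying in `W` are not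
all contained in another one. Since a proper subspace of `W ≠ E` is contained in a subspace of the
same dimension as `W` different from `W`, this says that the columns lying in `W` span `W`. The dual
code consists of the linear relations between columns, so the code is projective iff the columns
represent distinct points. -/

section Subspaces

theorem sSup_image_span_singleton_inter_setOf_le {R M : Type*} [Semiring R] [AddCommMonoid M]
    [Module R M] (X : Set M) (W : Submodule R M) :
    sSup ((fun v => Submodule.span R {v}) '' X ∩ {P | P ≤ W}) = Submodule.span R (X ∩ W) := by
  have hW : (fun v => Submodule.span R {v}) ⁻¹' {P | P ≤ W} = W :=
    Set.ext fun v => Submodule.span_singleton_le_iff_mem v W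
  rw [← Set.image_inter_preimage, hW, sSup_image, Submodule.span_eq_iSup_of_singleton_spans]

variable {K E : Type*} [DivisionRing K] [AddCommGroup E] [Module K E]

theorem forall_card_le_two_linearIndepOn_iff {ι : Type*} {g : ι → E} :
    (∀ T : Finset ι, T.card ≤ 2 → LinearIndepOn K g T) ↔
      (∀ j, g j ≠ 0) ∧ Function.Injective fun j => Submodule.span K {g j} := by
  classical
  constructor
  · intro h
    have hne (j : ι) : g j ≠ 0 := by simpa using h {j} (by simp)
    refine ⟨hne, fun i j hspan => by_contra fun hij => ?_⟩
    have hmem : g j ∈ Submodule.span K {g i} :=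
      hspan.ge (Submodule.mem_span_singleton_self (g j))
    obtain ⟨c, hc⟩ := Submodule.mem_span_singleton.1 hmem
    have hpair : LinearIndepOn K g {i, j} := by simpa using h {i, j} Finset.card_le_two
    exact (linearIndepOn_pair_iff g hij (hne i)).1 hpair c hc
  · rintro ⟨hne, hinj⟩ T hT
    obtain hT | hT | hT : T.card = 0 ∨ T.card = 1 ∨ T.card = 2 := by lia
    · rw [Finset.card_eq_zero.1 hT]
      simp
    · obtain ⟨i, rfl⟩ := Finset.card_eq_one.1 hT
      simpa using hne i
    · obtain ⟨i, j, hij, rfl⟩ := Finset.card_eq_two.1 hT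
      rw [Finset.coe_pair, linearIndepOn_pair_iff g hij (hne i)]
      intro c hc
      have hc0 : c ≠ 0 := by
        rintro rfl
        exact hne j (by rw [← hc, zero_smul])
      have hspan : Submodule.span K {g i} = Submodule.span K {g j} := by
        rw [← hc, Submodule.span_singleton_smul_eq hc0.isUnit]
      exact hij (hinj hspan)

variable [FiniteDimensional K E]

theorem exists_le_submodule_finrank_eq (S : Submodule K E) {d : ℕ} (hS : finrank K S ≤ d)
    (hd : d ≤ finrank K E) : ∃ W : Submodule K E, S ≤ W ∧ finrank K W = d := by
  induction d, hS using Nat.le_induction with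
  | base => exact ⟨S, le_rfl, rfl⟩
  | succ d _ ih =>
    obtain ⟨W, hSW, hW⟩ := ih (by lia)
    obtain ⟨v, -, hv⟩ : ∃ v ∈ (⊤ : Submodule K E), v ∉ W :=
      SetLike.exists_of_lt (Submodule.lt_top_of_finrank_lt_finrank (by lia))
    exact ⟨W ⊔ Submodule.span K {v}, hSW.trans le_sup_left,
      by rw [Submodule.finrank_sup_span_singleton hv, hW]⟩

theorem exists_le_submodule_mem_finrank_eq (S : Submodule K E) (v : E) {d : ℕ}
    (hS : finrank K S < d) (hd : d ≤ finrank K E) :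
    ∃ W : Submodule K E, S ≤ W ∧ v ∈ W ∧ finrank K W = d := by
  have hfinrank : finrank K ↥(S ⊔ Submodule.span K {v}) ≤ d :=
    calc finrank K ↥(S ⊔ Submodule.span K {v})
        ≤ finrank K S + finrank K (Submodule.span K {v}) :=
          Submodule.finrank_add_le_finrank_add_finrank _ _
      _ ≤ finrank K S + 1 := by
          gcongr
          simpa using finrank_span_le_card (R := K) ({v} : Set E)
      _ ≤ d := hS
  obtain ⟨W, hSW, hW⟩ := exists_le_submodule_finrank_eq _ hfinrank hd
  exact ⟨W, le_sup_left.trans hSW,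
    hSW (Submodule.mem_sup_right (Submodule.mem_span_singleton_self v)), hW⟩

theorem eq_top_of_forall_finrank_eq_le (S : Submodule K E) {d : ℕ} (hpos : 0 < d)
    (hd : d ≤ finrank K E) (hS : ∀ W : Submodule K E, finrank K W = d → W ≤ S) : S = ⊤ := by
  rw [Submodule.eq_top_iff']
  intro v
  obtain ⟨W, -, hvW, hW⟩ :=
    exists_le_submodule_mem_finrank_eq (⊥ : Submodule K E) v (by rwa [finrank_bot]) hd
  exact hS W hW hvW

theorem forall_span_inter_eq_iff {X : Set E} (hX : Submodule.span K X = ⊤) {d : ℕ}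
    (hd : d ≤ finrank K E) :
    (∀ W : Submodule K E, finrank K W = d → Submodule.span K (X ∩ W) = W) ↔
      ∀ W W' : Submodule K E, finrank K W = d → finrank K W' = d →
        X ∩ W ⊆ (W' : Set E) → W' = W := by
  refine ⟨fun h W W' hW hW' hsub => ?_, fun h W hW => ?_⟩
  · have hle : W ≤ W' := h W hW ▸ Submodule.span_le.2 hsub
    exact (Submodule.eq_of_le_of_finrank_eq hle (hW.trans hW'.symm)).symm
  · have hle : Submodule.span K (X ∩ W) ≤ W := Submodule.span_le.2 Set.inter_subset_right
    by_contra hne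
    have hW_top : W ≠ ⊤ := by
      rintro rfl
      exact hne (by simpa using hX)
    obtain ⟨v, -, hv⟩ := SetLike.exists_of_lt hW_top.lt_top
    obtain ⟨W', hspan, hvW', hW'⟩ := exists_le_submodule_mem_finrank_eq _ v
      ((Submodule.finrank_lt_finrank_of_lt (hle.lt_of_ne hne)).trans_eq hW) hd
    exact hv (h W W' hW hW' (Submodule.span_le.1 hspan) ▸ hvW')

end Subspaces

section ColumnEncoder

variable {R M ι : Type*} [CommRing R] [AddCommGroup M] [Module R M]

variable (R) in
/-- The encoder of the code whose generator matrix has the columns `g j`. Messages are functionals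
`f` on the space `M` of columns, so that no basis of `M` is needed; `f` is encoded as the word
`(f (g j))_j`. -/
def columnEncoder (g : ι → M) : Dual R M →ₗ[R] (ι → R) :=
  LinearMap.pi fun j => Dual.eval R M (g j)

@[simp]
theorem columnEncoder_apply (g : ι → M) (f : Dual R M) (j : ι) :
    columnEncoder R g f j = f (g j) :=
  rfl

theorem ker_columnEncoder (g : ι → M) :
    LinearMap.ker (columnEncoder R g) = (Submodule.span R (Set.range g)).dualAnnihilator := by
  ext f
  rw [← SetLike.mem_coe (p := Submodule.dualAnnihilator _), Submodule.coe_dualAnnihilator_span]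
  simp [funext_iff, Set.range_subset_iff]

theorem exists_columnEncoder_eq [IsReflexive R M] (φ : Dual R M →ₗ[R] (ι → R)) :
    ∃ g : ι → M, columnEncoder R g = φ := by
  refine ⟨fun j => (evalEquiv R M).symm (LinearMap.proj j ∘ₗ φ), ?_⟩
  ext f j
  simp

variable {K E : Type*} [Field K] [AddCommGroup E] [Module K E]

theorem columnEncoder_injective_iff {g : ι → E} :
    Function.Injective (columnEncoder K g) ↔ Submodule.span K (Set.range g) = ⊤ := by
  rw [← LinearMap.ker_eq_bot, ker_columnEncoder, Submodule.dualAnnihilator_eq_bot_iff]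

theorem finrank_range_columnEncoder [FiniteDimensional K E] {g : ι → E}
    (hg : Submodule.span K (Set.range g) = ⊤) :
    finrank K (LinearMap.range (columnEncoder K g)) = finrank K E := by
  rw [LinearMap.finrank_range_of_inj (columnEncoder_injective_iff.2 hg), Subspace.dual_finrank_eq]

theorem exists_range_columnEncoder_eq [FiniteDimensional K E] (C : Submodule K (ι → K))
    [FiniteDimensional K C] (hC : finrank K C = finrank K E) :
    ∃ g : ι → E, Submodule.span K (Set.range g) = ⊤ ∧
      LinearMap.range (columnEncoder K g) = C := by
  let e : Dual K E ≃ₗ[K] C :=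
    LinearEquiv.ofFinrankEq _ _ (Subspace.dual_finrank_eq.trans hC.symm)
  obtain ⟨g, hg⟩ := exists_columnEncoder_eq (C.subtype ∘ₗ e.toLinearMap)
  refine ⟨g, columnEncoder_injective_iff.1 ?_, ?_⟩
  · rw [hg]
    exact C.subtype_injective.comp e.injective
  · rw [hg, LinearMap.range_comp, LinearEquiv.range, Submodule.map_top, C.range_subtype]

end ColumnEncoder

section Minimality

variable {K E ι : Type*} [Field K] [AddCommGroup E] [Module K E]

/-- The subcode associated with a subspace `W` of the space of columns: the encodings of the
functionals vanishing on `W`. -/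
def annihilatorSubcode (g : ι → E) (W : Submodule K E) : Submodule K (ι → K) :=
  W.dualAnnihilator.map (columnEncoder K g)

theorem annihilatorSubcode_le_range (g : ι → E) (W : Submodule K E) :
    annihilatorSubcode g W ≤ LinearMap.range (columnEncoder K g) :=
  LinearMap.map_le_range

theorem csupp_annihilatorSubcode (g : ι → E) (W : Submodule K E) :
    csupp (annihilatorSubcode g W) = {j | g j ∉ W} := by
  ext j
  rw [Set.mem_ofPred_eq, ← Subspace.forall_mem_dualAnnihilator_apply_eq_zero_iff]
  simp [csupp, annihilatorSubcode]

theorem csupp_annihilatorSubcode_subset_iff {g : ι → E} {W W' : Submodule K E} :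
    csupp (annihilatorSubcode g W') ⊆ csupp (annihilatorSubcode g W) ↔
      Set.range g ∩ W ⊆ (W' : Set E) := by
  simp [csupp_annihilatorSubcode, Set.subset_def, not_imp_not]

theorem annihilatorSubcode_injective {g : ι → E} (hg : Submodule.span K (Set.range g) = ⊤) :
    Function.Injective (annihilatorSubcode (K := K) g) :=
  (Submodule.map_injective_of_injective (columnEncoder_injective_iff.2 hg)).comp
    fun _ _ => Subspace.dualAnnihilator_inj.1

variable [FiniteDimensional K E]

theorem finrank_add_finrank_annihilatorSubcode {g : ι → E}
    (hg : Submodule.span K (Set.range g) = ⊤) (W : Submodule K E) :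
    finrank K W + finrank K (annihilatorSubcode g W) = finrank K E := by
  let e : W.dualAnnihilator ≃ₗ[K] annihilatorSubcode g W :=
    Submodule.equivMapOfInjective _ (columnEncoder_injective_iff.2 hg) _
  rw [← e.finrank_eq, Subspace.finrank_add_finrank_dualAnnihilator_eq]

theorem exists_annihilatorSubcode_eq {g : ι → E} {U : Submodule K (ι → K)}
    (hU : U ≤ LinearMap.range (columnEncoder K g)) :
    ∃ W : Submodule K E, annihilatorSubcode g W = U := by
  refine ⟨(U.comap (columnEncoder K g)).dualCoannihilator, ?_⟩
  rw [annihilatorSubcode, Subspace.dualCoannihilator_dualAnnihilator_eq,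
    Submodule.map_comap_eq_of_le hU]

theorem sMinimal_range_columnEncoder_iff {g : ι → E} (hg : Submodule.span K (Set.range g) = ⊤)
    {s : ℕ} (hs : s ≤ finrank K E) :
    SMinimal (LinearMap.range (columnEncoder K g)) s ↔
      ∀ W W' : Submodule K E, finrank K W = finrank K E - s → finrank K W' = finrank K E - s →
        Set.range g ∩ W ⊆ (W' : Set E) → W' = W := by
  have hfinrank (W : Submodule K E) :
      finrank K (annihilatorSubcode g W) = s ↔ finrank K W = finrank K E - s := by
    have := finrank_add_finrank_annihilatorSubcode hg W
    lia
  constructor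
  · intro h W W' hW hW' hsub
    obtain ⟨-, -, hmin⟩ := h _ (annihilatorSubcode_le_range g W) ((hfinrank W).2 hW)
    exact annihilatorSubcode_injective hg <| hmin _ (annihilatorSubcode_le_range g W')
      ((hfinrank W').2 hW') (csupp_annihilatorSubcode_subset_iff.2 hsub)
  · intro h U hU hUs
    refine ⟨hU, hUs, fun V hV hVs hsub => ?_⟩
    obtain ⟨W, rfl⟩ := exists_annihilatorSubcode_eq hU
    obtain ⟨W', rfl⟩ := exists_annihilatorSubcode_eq hV
    rw [h W W' ((hfinrank W).1 hUs) ((hfinrank W').1 hVs)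
      (csupp_annihilatorSubcode_subset_iff.1 hsub)]

end Minimality

section Projectivity

variable {K E ι : Type*} [Field K] [AddCommGroup E] [Module K E] [Fintype ι]

theorem mem_dualCode_range_columnEncoder (g : ι → E) (x : ι → K) :
    x ∈ dualCode (LinearMap.range (columnEncoder K g)) ↔ ∑ j, x j • g j = 0 := by
  rw [← Module.forall_dual_apply_eq_zero_iff K]
  simp [dualCode, Submodule.mem_iInf, mul_comm]

theorem forall_dualCode_lt_ncard_iff_linearIndepOn {g : ι → E} {d : ℕ} :
    (∀ x ∈ dualCode (LinearMap.range (columnEncoder K g)), x ≠ 0 →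
      d < ({j | x j ≠ 0} : Set ι).ncard) ↔
      ∀ T : Finset ι, T.card ≤ d → LinearIndepOn K g T := by
  classical
  simp only [mem_dualCode_range_columnEncoder]
  constructor
  · intro h T hT
    rw [linearIndepOn_finset_iff]
    intro c hc
    let x : ι → K := fun j => if j ∈ T then c j else 0
    have hx_sum : ∑ j, x j • g j = 0 := by simpa [x, ite_smul, Finset.sum_ite_mem] using hc
    have hx_ncard : ({j | x j ≠ 0} : Set ι).ncard ≤ d :=
      calc ({j | x j ≠ 0} : Set ι).ncard
          ≤ (T : Set ι).ncard := Set.ncard_le_ncard fun j hj => by_contra fun hjT =>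
            hj (if_neg hjT)
        _ = T.card := Set.ncard_coe_finset T
        _ ≤ d := hT
    have hx_zero : x = 0 := by_contra fun hx => (h x hx_sum hx).not_ge hx_ncard
    intro j hj
    simpa [x, hj] using congrFun hx_zero j
  · intro h x hx_sum hx_ne
    by_contra! hcard
    rw [Set.ncard_eq_toFinset_card'] at hcard
    have hsum : ∑ j ∈ {j | x j ≠ 0}.toFinset, x j • g j = 0 := by
      rw [← hx_sum]
      refine Finset.sum_subset (Finset.subset_univ _) fun j _ hj => ?_
      rw [show x j = 0 by simpa using hj, zero_smul]
    refine hx_ne (funext fun j => by_contra fun hj => hj ?_)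
    exact linearIndepOn_finset_iff.1 (h _ hcard) x hsum j (by simpa using hj)

theorem isProjectiveCode_range_columnEncoder_iff {g : ι → E} :
    IsProjectiveCode (LinearMap.range (columnEncoder K g)) ↔
      (∀ j, g j ≠ 0) ∧ Function.Injective fun j => Submodule.span K {g j} :=
  forall_dualCode_lt_ncard_iff_linearIndepOn.trans forall_card_le_two_linearIndepOn_iff

end Projectivity

section Points

variable {K : Type*} [Field K] {k s : ℕ}

theorem isCuttingSBlocking_range_span_iff {ι : Type*} {g : ι → Fin k → K} (hg : ∀ j, g j ≠ 0) :
    IsCuttingSBlocking K k (Set.range fun j => Submodule.span K {g j}) s ↔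
      ∀ W : Submodule K (Fin k → K), finrank K W = k - s →
        Submodule.span K (Set.range g ∩ W) = W := by
  have hpoints : (Set.range fun j => Submodule.span K {g j}) ⊆ PGpoints K k :=
    Set.range_subset_iff.2 fun j => finrank_span_singleton (hg j)
  rw [IsCuttingSBlocking, and_iff_right hpoints]
  simp only [← sSup_image_span_singleton_inter_setOf_le, ← Set.range_comp, Function.comp_def]

theorem isCuttingSBlocking_range_span_iff_sMinimal {ι : Type*} {g : ι → Fin k → K} (hs : s ≤ k)
    (hg_ne : ∀ j, g j ≠ 0) (hg : Submodule.span K (Set.range g) = ⊤) :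
    IsCuttingSBlocking K k (Set.range fun j => Submodule.span K {g j}) s ↔
      SMinimal (LinearMap.range (columnEncoder K g)) s := by
  have hk : finrank K (Fin k → K) = k := finrank_fin_fun K
  rw [isCuttingSBlocking_range_span_iff hg_ne, forall_span_inter_eq_iff hg (by lia),
    sMinimal_range_columnEncoder_iff hg (by lia), hk]

theorem IsCuttingSBlocking.sSup_eq_top {B : Set (Submodule K (Fin k → K))}
    (hB : IsCuttingSBlocking K k B s) (hs : s < k) : sSup B = ⊤ := by
  refine eq_top_of_forall_finrank_eq_le _ (d := k - s) (by lia)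
    (by rw [finrank_fin_fun]; lia) fun W hW => ?_
  rw [← hB.2 W hW]
  exact sSup_le_sSup Set.inter_subset_left

theorem exists_injective_range_span_eq {n : ℕ} {B : Set (Submodule K (Fin k → K))}
    (hB : B ⊆ PGpoints K k) (hn : B.encard = n) :
    ∃ g : Fin n → Fin k → K, (∀ j, g j ≠ 0) ∧
      (Function.Injective fun j => Submodule.span K {g j}) ∧
      (Set.range fun j => Submodule.span K {g j}) = B := by
  have : Finite B := Set.finite_of_encard_eq_coe hn
  have hcard : Nat.card B = n := congrArg ENat.toNat hn
  let e : Fin n ≃ B := (Finite.equivFinOfCardEq hcard).symm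
  let P (j : Fin n) : Projectivization K (Fin k → K) := .mk'' (e j).1 (hB (e j).2)
  have hspan : (fun j => Submodule.span K {(P j).rep}) = fun j => (e j).1 := by
    funext j
    exact (P j).submodule_eq.symm.trans (Projectivization.submodule_mk'' _ _)
  refine ⟨fun j => (P j).rep, fun j => (P j).rep_nonzero, ?_, ?_⟩
  · rw [hspan]
    exact Subtype.val_injective.comp e.injective
  · rw [hspan]
    exact (e.surjective.range_comp Subtype.val).trans Subtype.range_coe

end Points

-- Over an infinite field `ncard` would also give an infinite `B` the size `0`, hence `encard`.
theorem cutting_iff_projective_sMinimal_general {K : Type*} [Field K] {n k s : ℕ} (hs : s < k) :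
    (∃ B : Set (Submodule K (Fin k → K)), IsCuttingSBlocking K k B s ∧ B.encard = n) ↔
      ∃ C : Submodule K (Fin n → K), finrank K C = k ∧ IsProjectiveCode C ∧ SMinimal C s := by
  constructor
  · rintro ⟨B, hB, hn⟩
    obtain ⟨g, hg_ne, hg_inj, rfl⟩ := exists_injective_range_span_eq hB.1 hn
    have hg : Submodule.span K (Set.range g) = ⊤ := by
      rw [Submodule.span_range_eq_iSup, ← sSup_range, hB.sSup_eq_top hs]
    exact ⟨LinearMap.range (columnEncoder K g),
      (finrank_range_columnEncoder hg).trans (finrank_fin_fun K),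
      isProjectiveCode_range_columnEncoder_iff.2 ⟨hg_ne, hg_inj⟩,
      (isCuttingSBlocking_range_span_iff_sMinimal hs.le hg_ne hg).1 hB⟩
  · rintro ⟨C, hC, hproj, hmin⟩
    obtain ⟨g, hg, rfl⟩ := exists_range_columnEncoder_eq C (hC.trans (finrank_fin_fun K).symm)
    obtain ⟨hg_ne, hg_inj⟩ := isProjectiveCode_range_columnEncoder_iff.1 hproj
    exact ⟨_, (isCuttingSBlocking_range_span_iff_sMinimal hs.le hg_ne hg).2 hmin,
      by simp [← Set.image_univ, hg_inj.encard_image]⟩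

/-- there exists a cutting `s`-blocking set of `PG(k-1,q)` of size `n` iff
there exists a projective `s`-minimal `[n,k]_q` linear code. -/
theorem cutting_iff_projective_sMinimal (n k s q : ℕ) (hq : Fintype.card F = q)
    (hs1 : 1 ≤ s) (hs2 : s ≤ k - 1) :
    (∃ B : Set (Submodule F (Fin k → F)), IsCuttingSBlocking F k B s ∧ B.ncard = n) ↔
    (∃ C : Submodule F (Fin n → F), Module.finrank F C = k ∧
      IsProjectiveCode C ∧ SMinimal C s) := by
  have : Finite (Submodule F (Fin k → F)) := Finite.of_injective _ SetLike.coe_injective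
  simpa [← Set.coe_ncard_eq_encard] using
    cutting_iff_projective_sMinimal_general (K := F) (n := n) (show s < k by lia)
end
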